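/- The Suslin number of an arbitrary charming rectifiable space is countable: if G is a rectifiable space that is a charming space, then every pairwise disjoint family of nonempty open subsets of G is countable. -/

import Mathlib

open Set Function TopologicalSpace

universe u

/-- A map between topological spaces is *perfect* if it is continuous, closed, and
every fiber is compact. -/
def PerfectMap {Y : Type*} {Z : Type*} [TopologicalSpace Y] [TopologicalSpace Z]
    (f : Y → Z) : Prop :=
  Continuous f ∧ IsClosedMap f ∧ ∀ z : Z, IsCompact (f ⁻¹' {z})

/-- A topological space `X` is a *Lindelöf Σ-space* if there exist a topological space `Y`,
a continuous surjection from `Y` onto `X`, and a perfect surjection from `Y` onto some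
second-countable space. -/
def IsLindelofSigma (X : Type u) [TopologicalSpace X] : Prop :=
  ∃ (Y : Type u) (tY : TopologicalSpace Y) (Z : Type u) (tZ : TopologicalSpace Z),
    @SecondCountableTopology Z tZ ∧
    (∃ f : Y → X, @Continuous Y X tY _ f ∧ Surjective f) ∧
    (∃ g : Y → Z, @PerfectMap Y Z tY tZ g ∧ Surjective g)

/-- A topological space `X` is a *charming space* if there is a subset `Y` of `X` that is a
Lindelöf Σ-space in the subspace topology and such that for every open `U ⊇ Y`,
the set `X \ U` is a Lindelöf Σ-space in the subspace topology. -/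
def IsCharming (X : Type u) [TopologicalSpace X] : Prop :=
  ∃ Y : Set X, IsLindelofSigma Y ∧
    ∀ U : Set X, IsOpen U → Y ⊆ U → IsLindelofSigma ↥(Uᶜ)

/-- A *CL-charming* space: the shell `Y` can be chosen closed. -/
def IsCLCharming (X : Type u) [TopologicalSpace X] : Prop :=
  ∃ Y : Set X, IsClosed Y ∧ IsLindelofSigma Y ∧
    ∀ U : Set X, IsOpen U → Y ⊆ U → IsLindelofSigma ↥(Uᶜ)

/-- A *CO-charming* space: the shell `Y` can be chosen compact. -/
def IsCOCharming (X : Type u) [TopologicalSpace X] : Prop :=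
  ∃ Y : Set X, IsCompact Y ∧ IsLindelofSigma Y ∧
    ∀ U : Set X, IsOpen U → Y ⊆ U → IsLindelofSigma ↥(Uᶜ)

/-- A space has a *countable network* if there is a countable family `N` of subsets such that
every point in every open set `V` is contained in a member of `N` contained in `V`. -/
def HasCountableNetwork (X : Type u) [TopologicalSpace X] : Prop :=
  ∃ N : Set (Set X), N.Countable ∧
    ∀ x : X, ∀ V : Set X, IsOpen V → x ∈ V → ∃ n ∈ N, x ∈ n ∧ n ⊆ V

/-- A topological space `X` is *weak (4,4)-structured* if there exist a topological space `Y`,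
a continuous surjection from `Y` onto `X`, and a perfect surjection from `Y` onto some
charming space. -/
def IsWeak44Structured (X : Type u) [TopologicalSpace X] : Prop :=
  ∃ (Y : Type u) (tY : TopologicalSpace Y) (M : Type u) (tM : TopologicalSpace M),
    @IsCharming M tM ∧
    (∃ f : Y → X, @Continuous Y X tY _ f ∧ Surjective f) ∧
    (∃ g : Y → M, @PerfectMap Y M tY tM g ∧ Surjective g)

/-!
A Mal'cev operation `M` turns a countable network modulo compact sets on a dense set into a
countable bound on cellularity (Uspenskij). Given disjoint open sets `U i` and points `x i ∈ U i`
of the dense set, one closes off a countable index set `A` so that every `x b` is mimicked by some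
cluster point `y` of `{x a | a ∈ A}`: `y` lies in the closure of each relevant set around `x b`,
so `M (x a) y (x b) ∈ closure (U a)` for all `a ∈ A`. But `M y y (x b) = x b`, so
`M (x a) y (x b) ∈ U b` for some `a ∈ A`, and disjointness forces `b = a`.

A rectification supplies both a Mal'cev operation and homogeneity. If the Lindelöf Σ-set `Y`
witnessing that `G` is charming is not dense, a closed neighbourhood avoiding it is Lindelöf Σ;
countably many translates of this neighbourhood cover `Y`, and what they miss is again Lindelöf Σ.
-/

open Filter Topology

section CountableNetworkModCompact

variable {X Y Z : Type*} [TopologicalSpace X] [TopologicalSpace Y] [TopologicalSpace Z]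

/-- A set `S` has a *countable network modulo compact sets* if there is a countable family `F` such
that each `y ∈ S` has a compact `K ⊆ S` all of whose open neighbourhoods contain a member of `F`
through `y`. This is the internal form of the Lindelöf Σ-property. Asking also for `y ∈ K` would
give the same notion, since `K ∪ {y}` serves as well as `K`. -/
def HasCountableNetworkModCompact (S : Set X) : Prop :=
  ∃ F : Set (Set X), F.Countable ∧ ∀ y ∈ S, ∃ K ⊆ S, IsCompact K ∧
    ∀ U : Set X, IsOpen U → K ⊆ U → ∃ s ∈ F, y ∈ s ∧ s ⊆ U

theorem PerfectMap.hasCountableNetworkModCompact [SecondCountableTopology Z] {g : Y → Z}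
    (hg : PerfectMap g) : HasCountableNetworkModCompact (univ : Set Y) := by
  obtain ⟨-, hclosed, hfiber⟩ := hg
  refine ⟨preimage g '' countableBasis Z, (countable_countableBasis Z).image _, fun y _ => ?_⟩
  refine ⟨g ⁻¹' {g y}, subset_univ _, hfiber (g y), fun U hU hyU => ?_⟩
  obtain ⟨B, hB, hyB, hBU⟩ := (isBasis_countableBasis Z).exists_subset_of_mem_open
    (singleton_subset_iff.1 (subset_kernImage_iff.2 hyU)) (isClosedMap_iff_kernImage.1 hclosed hU)
  exact ⟨g ⁻¹' B, mem_image_of_mem _ hB, hyB, subset_kernImage_iff.1 hBU⟩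

namespace HasCountableNetworkModCompact

variable {S : Set X}

theorem image (hS : HasCountableNetworkModCompact S) {f : X → Y} (hf : Continuous f) :
    HasCountableNetworkModCompact (f '' S) := by
  obtain ⟨F, hF, hS⟩ := hS
  refine ⟨Set.image f '' F, hF.image _, ?_⟩
  rintro _ ⟨y, hy, rfl⟩
  obtain ⟨K, hKS, hK, hKF⟩ := hS y hy
  refine ⟨f '' K, image_mono hKS, hK.image hf, fun U hU hKU => ?_⟩
  obtain ⟨s, hs, hys, hsU⟩ := hKF (f ⁻¹' U) (hU.preimage hf) (image_subset_iff.1 hKU)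
  exact ⟨f '' s, mem_image_of_mem _ hs, mem_image_of_mem f hys, image_subset_iff.2 hsU⟩

theorem iUnion {ι : Type*} [Countable ι] {S : ι → Set X}
    (hS : ∀ i, HasCountableNetworkModCompact (S i)) :
    HasCountableNetworkModCompact (⋃ i, S i) := by
  choose F hF hS using hS
  refine ⟨⋃ i, F i, countable_iUnion hF, fun y hy => ?_⟩
  obtain ⟨i, hyi⟩ := mem_iUnion.1 hy
  obtain ⟨K, hKS, hK, hKF⟩ := hS i y hyi
  refine ⟨K, hKS.trans (subset_iUnion S i), hK, fun U hU hKU => ?_⟩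
  obtain ⟨s, hs, hsU⟩ := hKF U hU hKU
  exact ⟨s, mem_iUnion_of_mem i hs, hsU⟩

theorem union {T : Set X} (hS : HasCountableNetworkModCompact S)
    (hT : HasCountableNetworkModCompact T) : HasCountableNetworkModCompact (S ∪ T) := by
  rw [union_eq_iUnion]
  exact iUnion (Bool.forall_bool.2 ⟨hT, hS⟩)

theorem exists_countable_forall_clusterPt (hS : HasCountableNetworkModCompact S) :
    ∃ F : Set (Set X), F.Countable ∧ ∀ y ∈ S, ∀ l : Filter X,
      (∀ s ∈ F, y ∈ s → sᶜ ∉ l) → ∃ z ∈ S, ClusterPt z l := by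
  obtain ⟨F, hF, hS⟩ := hS
  refine ⟨F, hF, fun y hy l hl => ?_⟩
  obtain ⟨K, hKS, hK, hKF⟩ := hS y hy
  by_contra! hno
  have hdisj : Disjoint (𝓝ˢ K) l := hK.disjoint_nhdsSet_left.2 fun z hz =>
    disjoint_iff.2 (not_neBot.1 (hno z (hKS hz)))
  obtain ⟨U, ⟨hU, hKU⟩, hUl⟩ := (hasBasis_nhdsSet K).disjoint_iff_left.1 hdisj
  obtain ⟨s, hs, hys, hsU⟩ := hKF U hU hKU
  exact hl s hs hys (mem_of_superset hUl (compl_subset_compl.2 hsU))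

theorem isLindelof (hS : HasCountableNetworkModCompact S) : IsLindelof S := by
  obtain ⟨F, hF, hcluster⟩ := hS.exists_countable_forall_clusterPt
  intro l _ _ hlS
  by_contra hno
  have hnull : ∀ y ∈ S, ∃ s ∈ F, y ∈ s ∧ sᶜ ∈ l := by
    intro y hy
    by_contra! hl
    exact hno (hcluster y hy l hl)
  have hmem : ⋂₀ {t | tᶜ ∈ F ∧ t ∈ l} ∈ l :=
    (countable_sInter_mem ((hF.preimage compl_injective).mono fun _ ht => ht.1)).2 fun _ ht => ht.2
  obtain ⟨y, hyt, hyS⟩ := Filter.nonempty_of_mem (inter_mem hmem (le_principal_iff.1 hlS))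
  obtain ⟨s, hs, hys, hsl⟩ := hnull y hyS
  exact hyt sᶜ ⟨(compl_compl s).symm ▸ hs, hsl⟩ hys

end HasCountableNetworkModCompact

end CountableNetworkModCompact

theorem IsLindelofSigma.hasCountableNetworkModCompact {X : Type u} [TopologicalSpace X] {S : Set X}
    (hS : IsLindelofSigma S) : HasCountableNetworkModCompact S := by
  obtain ⟨Y, _, Z, _, _, ⟨f, hf, hfsurj⟩, ⟨g, hg, -⟩⟩ := hS
  have himage := hg.hasCountableNetworkModCompact.image (continuous_subtype_val.comp hf)
  rwa [image_univ, hfsurj.range_comp, Subtype.range_coe] at himage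

/-- Löwenheim–Skolem closing-off for one predicate `P` with finitely many parameters. -/
theorem exists_countable_closed_under_witnesses {ι α : Type*} (D : ι → Set α)
    (hD : ∀ i, (D i).Countable) (P : Set α → ι → Prop) :
    ∃ A : Set ι, A.Countable ∧
      ∀ L : Set α, L.Finite → L ⊆ ⋃ i ∈ A, D i → (∃ i, P L i) → ∃ i ∈ A, P L i := by
  rcases isEmpty_or_nonempty ι with _ | _
  · exact ⟨∅, countable_empty, fun _ _ _ ⟨i, _⟩ => isEmptyElim i⟩
  have hwitness (L : Set α) (hL : ∃ i, P L i) : ∃ i, P L i := hL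
  choose! w hw using hwitness
  let step (A : Set ι) : Set ι := A ∪ w '' {L | L.Finite ∧ L ⊆ ⋃ i ∈ A, D i}
  let A (n : ℕ) : Set ι := step^[n] ∅
  have hstep (n : ℕ) : A (n + 1) = step (A n) := iterate_succ_apply' step n ∅
  have hmono : Monotone A := monotone_nat_of_le_succ fun n => (hstep n).symm ▸ subset_union_left
  have hcount (n : ℕ) : (A n).Countable := by
    induction n with
    | zero => exact countable_empty
    | succ n ih =>
      rw [hstep]
      exact ih.union ((countable_ofPred_finite_subset (ih.biUnion fun i _ => hD i)).image w)
  refine ⟨⋃ n, A n, countable_iUnion hcount, fun L hL hLA hP => ?_⟩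
  obtain ⟨n, hn⟩ : ∃ n, L ⊆ ⋃ i ∈ A n, D i := by
    lift L to Finset α using hL
    rw [biUnion_iUnion] at hLA
    have hdir : Directed (· ⊆ ·) fun n => ⋃ i ∈ A n, D i :=
      Monotone.directed_le fun _ _ h => biUnion_subset_biUnion_left (hmono h)
    exact hdir.exists_mem_subset_of_finset_subset_biUnion hLA
  refine ⟨w L, mem_iUnion_of_mem (n + 1) ?_, hw L hP⟩
  rw [hstep]
  exact Or.inr (mem_image_of_mem w ⟨hL, hn⟩)

theorem HasCountableNetworkModCompact.exists_countable_forall_mem_closure {X ι : Type*}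
    [TopologicalSpace X] {S : Set X} (hS : HasCountableNetworkModCompact S) {x : ι → X}
    (hx : ∀ i, x i ∈ S) (C : ι → Set (Set X)) (hC : ∀ i, (C i).Countable) :
    ∃ A : Set ι, A.Countable ∧ ∀ b, ∃ y ∈ closure (x '' A),
      ∀ a ∈ A, ∀ s ∈ C a, x b ∈ s → y ∈ closure s := by
  obtain ⟨F, hF, hcluster⟩ := hS.exists_countable_forall_clusterPt
  obtain ⟨A, hA, hclosed⟩ := exists_countable_closed_under_witnesses (fun i => F ∪ C i)
    (fun i => hF.union (hC i)) fun L i => x i ∈ ⋂₀ L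
  refine ⟨A, hA, fun b => ?_⟩
  obtain ⟨a₀, ha₀, -⟩ := hclosed ∅ finite_empty (empty_subset _) ⟨b, by simp⟩
  let T : Set (Set X) := {s | s ∈ ⋃ i ∈ A, (F ∪ C i) ∧ x b ∈ s}
  let l : Filter X := generate T ⊓ 𝓟 (x '' A)
  have hl : l.NeBot := by
    refine inf_principal_neBot_iff.2 fun U hU => ?_
    obtain ⟨L, hLT, hL, hLU⟩ := mem_generate_iff.1 hU
    obtain ⟨a, ha, hxa⟩ := hclosed L hL (fun s hs => (hLT hs).1) ⟨b, fun s hs => (hLT hs).2⟩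
    exact ⟨x a, hLU hxa, mem_image_of_mem x ha⟩
  have hTl {a : ι} (ha : a ∈ A) {s : Set X} (hs : s ∈ F ∪ C a) (hbs : x b ∈ s) : s ∈ l :=
    mem_inf_of_left (mem_generate_of_mem ⟨mem_biUnion ha hs, hbs⟩)
  obtain ⟨y, -, hy⟩ := hcluster (x b) (hx b) l fun s hs hbs =>
    compl_notMem (hTl ha₀ (Or.inl hs) hbs)
  exact ⟨y, mem_closure_iff_clusterPt.2 (hy.mono inf_le_right), fun a ha s hs hbs =>
    mem_closure_iff_clusterPt.2 (hy.mono (le_principal_iff.2 (hTl ha (Or.inr hs) hbs)))⟩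

/-- A *Mal'cev operation* on a topological space: a continuous ternary operation satisfying
`M x y y = x = M y y x`, such as `x * y⁻¹ * z` on a topological group. -/
structure IsMaltsevOperation {X : Type*} [TopologicalSpace X] (M : X → X → X → X) : Prop where
  continuous : Continuous fun p : X × X × X => M p.1 p.2.1 p.2.2
  apply_right_eq_left : ∀ x y, M x y y = x
  apply_left_eq_right : ∀ x y, M y y x = x

namespace IsMaltsevOperation

variable {X ι : Type*} [TopologicalSpace X] {M : X → X → X → X} {S : Set X}

theorem exists_countable_cover (hM : IsMaltsevOperation M) (hS : IsLindelof S) {U : Set X}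
    (hU : IsOpen U) {x : X} (hx : x ∈ U) :
    ∃ C : Set (Set X), C.Countable ∧ S ⊆ ⋃₀ C ∧ ∀ s ∈ C, ∀ y ∈ s, ∀ z ∈ s, M x y z ∈ U := by
  have hcont : Continuous fun p : X × X => M x p.1 p.2 :=
    hM.continuous.comp (continuous_const.prodMk continuous_id)
  have hsquare (y : X) : ∃ s ∈ 𝓝 y, ∀ a ∈ s, ∀ b ∈ s, M x a b ∈ U := by
    have hnhds : (fun p : X × X => M x p.1 p.2) ⁻¹' U ∈ 𝓝 (y, y) :=
      (hU.preimage hcont).mem_nhds (by rwa [mem_preimage, hM.apply_right_eq_left])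
    rw [nhds_prod_eq, mem_prod_same_iff] at hnhds
    obtain ⟨s, hs, hsU⟩ := hnhds
    exact ⟨s, hs, fun a ha b hb => hsU (mk_mem_prod ha hb)⟩
  choose V hV hVU using hsquare
  obtain ⟨t, ht, -, hSt⟩ := hS.elim_nhds_subcover V fun y _ => hV y
  exact ⟨V '' t, ht.image V, (sUnion_image V t).symm ▸ hSt, forall_mem_image.2 fun y _ => hVU y⟩

theorem countable_of_pairwise_disjoint_of_dense (hM : IsMaltsevOperation M)
    (hS : HasCountableNetworkModCompact S) (hdense : Dense S) {U : ι → Set X}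
    (hopen : ∀ i, IsOpen (U i)) (hne : ∀ i, (U i).Nonempty) (hdisj : Pairwise (Disjoint on U)) :
    Countable ι := by
  choose x hxU hxS using fun i => hdense.inter_open_nonempty (U i) (hopen i) (hne i)
  choose C hC hCS hCU using fun i => hM.exists_countable_cover hS.isLindelof (hopen i) (hxU i)
  obtain ⟨A, hA, hclosure⟩ := hS.exists_countable_forall_mem_closure hxS C hC
  suffices hall : ∀ b, b ∈ A from countable_univ_iff.1 (eq_univ_of_forall hall ▸ hA)
  intro b
  obtain ⟨y, hyA, hyC⟩ := hclosure b
  have hmem_closure (a : ι) (ha : a ∈ A) : M (x a) y (x b) ∈ closure (U a) := by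
    obtain ⟨s, hs, hbs⟩ := hCS a (hxS b)
    have hcont : Continuous fun z => M (x a) z (x b) :=
      hM.continuous.comp (by fun_prop : Continuous fun z => (x a, z, x b))
    exact map_mem_closure (f := fun z => M (x a) z (x b)) hcont (hyC a ha s hs hbs)
      fun z hz => hCU a s hs z hz (x b) hbs
  obtain ⟨a, ha, hab⟩ : ∃ a ∈ A, M (x a) y (x b) ∈ U b := by
    have hcont : Continuous fun z => M z y (x b) :=
      hM.continuous.comp (by fun_prop : Continuous fun z => (z, y, x b))
    have hy : M y y (x b) ∈ U b := (hM.apply_left_eq_right (x b) y).symm ▸ hxU b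
    obtain ⟨_, hz, a, ha, rfl⟩ := mem_closure_iff.1 hyA _ ((hopen b).preimage hcont) hy
    exact ⟨a, ha, hz⟩
  have hmeet : ¬Disjoint (U a) (U b) := fun h =>
    disjoint_left.1 (h.closure_left (hopen b)) (hmem_closure a ha) hab
  exact hdisj.eq hmeet ▸ ha

end IsMaltsevOperation

theorem IsCharming.exists_dense_hasCountableNetworkModCompact {X : Type u} [TopologicalSpace X]
    [RegularSpace X] (hX : IsCharming X) (hhom : ∀ x y : X, ∃ h : X ≃ₜ X, h x = y) :
    ∃ S : Set X, Dense S ∧ HasCountableNetworkModCompact S := by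
  obtain ⟨Y, hY, hYU⟩ := hX
  replace hY := hY.hasCountableNetworkModCompact
  by_cases hdense : Dense Y
  · exact ⟨Y, hdense, hY⟩
  obtain ⟨v, hv⟩ : ∃ v, v ∉ closure Y := not_forall.1 hdense
  obtain ⟨t, htv, htclosed, htY⟩ :=
    exists_mem_nhds_isClosed_subset (isClosed_closure.isOpen_compl.mem_nhds hv)
  have ht : HasCountableNetworkModCompact t := by
    have hYt : Y ⊆ tᶜ := fun y hy hyt => htY hyt (subset_closure hy)
    exact compl_compl t ▸ (hYU tᶜ htclosed.isOpen_compl hYt).hasCountableNetworkModCompact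
  choose h hh using hhom v
  have hnhds (g : X) : interior (h g '' t) ∈ 𝓝 g := by
    refine interior_mem_nhds.2 ?_
    simpa only [hh] using (h g).isOpenMap.image_mem_nhds htv
  obtain ⟨c, hc, -, hYc⟩ := hY.isLindelof.elim_nhds_subcover _ fun g _ => hnhds g
  have : Countable c := hc
  set W : Set X := ⋃ g ∈ c, interior (h g '' t) with hW
  have htranslates : HasCountableNetworkModCompact (⋃ g : c, h g '' t) :=
    .iUnion fun g => ht.image (h g).continuous
  have hrest : HasCountableNetworkModCompact Wᶜ :=
    (hYU W (isOpen_biUnion fun _ _ => isOpen_interior) hYc).hasCountableNetworkModCompact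
  have hWsub : W ⊆ ⋃ g : c, h g '' t := by
    rw [hW, biUnion_eq_iUnion]
    exact iUnion_mono fun _ => interior_subset
  have hcover : (⋃ g : c, h g '' t) ∪ Wᶜ = univ :=
    eq_univ_of_univ_subset (union_compl_self W ▸ union_subset_union_left _ hWsub)
  exact ⟨univ, dense_univ, hcover ▸ htranslates.union hrest⟩

/-- A *rectification* of `G`: a homeomorphism of `G × G` over the first coordinate that carries the
diagonal to `G × {e}`. For a topological group one takes `(x, y) ↦ (x, x⁻¹ * y)`. -/
structure Rectification (G : Type*) [TopologicalSpace G] where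
  homeo : G × G ≃ₜ G × G
  e : G
  fst_homeo : ∀ z, (homeo z).1 = z.1
  homeo_diag : ∀ x, homeo (x, x) = (x, e)

namespace Rectification

variable {G : Type*} [TopologicalSpace G] (r : Rectification G)

/-- The analogue of `x⁻¹ * y` for a rectification. -/
def leftDiv (x y : G) : G := (r.homeo (x, y)).2

/-- The analogue of `x * y` for a rectification, inverse to `leftDiv x`. -/
def mul (x y : G) : G := (r.homeo.symm (x, y)).2

theorem homeo_mk (x y : G) : r.homeo (x, y) = (x, r.leftDiv x y) :=
  Prod.ext (r.fst_homeo (x, y)) rfl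

theorem symm_mk (x y : G) : r.homeo.symm (x, y) = (x, r.mul x y) := by
  refine Prod.ext ?_ rfl
  rw [← r.fst_homeo, r.homeo.apply_symm_apply]

theorem mul_leftDiv (x y : G) : r.mul x (r.leftDiv x y) = y := by
  rw [mul, ← homeo_mk, r.homeo.symm_apply_apply]

theorem leftDiv_mul (x y : G) : r.leftDiv x (r.mul x y) = y := by
  rw [leftDiv, ← symm_mk, r.homeo.apply_symm_apply]

theorem leftDiv_self (x : G) : r.leftDiv x x = r.e := by
  rw [leftDiv, homeo_diag]

theorem mul_e (x : G) : r.mul x r.e = x := by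
  rw [← r.leftDiv_self x, mul_leftDiv]

theorem continuous_leftDiv : Continuous fun p : G × G => r.leftDiv p.1 p.2 :=
  continuous_snd.comp r.homeo.continuous

theorem continuous_mul : Continuous fun p : G × G => r.mul p.1 p.2 :=
  continuous_snd.comp r.homeo.symm.continuous

/-- The analogue of left multiplication by `y * x⁻¹`, a self-homeomorphism taking `x` to `y`. -/
def translate (x y : G) : G ≃ₜ G where
  toFun z := r.mul y (r.leftDiv x z)
  invFun z := r.mul x (r.leftDiv y z)
  left_inv z := by simp only [leftDiv_mul, mul_leftDiv]
  right_inv z := by simp only [leftDiv_mul, mul_leftDiv]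
  continuous_toFun := r.continuous_mul.comp
    (continuous_const.prodMk (r.continuous_leftDiv.comp (continuous_const.prodMk continuous_id)))
  continuous_invFun := r.continuous_mul.comp
    (continuous_const.prodMk (r.continuous_leftDiv.comp (continuous_const.prodMk continuous_id)))

theorem translate_apply_self (x y : G) : r.translate x y x = y := by
  change r.mul y (r.leftDiv x x) = y
  rw [leftDiv_self, mul_e]

theorem isMaltsevOperation : IsMaltsevOperation fun x y z => r.mul x (r.leftDiv y z) where
  continuous := r.continuous_mul.comp
    (continuous_fst.prodMk (r.continuous_leftDiv.comp continuous_snd))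
  apply_right_eq_left x y := by rw [leftDiv_self, mul_e]
  apply_left_eq_right x y := r.mul_leftDiv y x

theorem regularSpace (r : Rectification G) : RegularSpace G := by
  refine .of_exists_mem_nhds_isClosed_subset fun x U hU => ?_
  have hmul : Tendsto (fun p : G × G => r.mul p.1 p.2) (𝓝 x ×ˢ 𝓝 r.e) (𝓝 x) := by
    simpa only [nhds_prod_eq, mul_e] using r.continuous_mul.tendsto (x, r.e)
  obtain ⟨O, hO, V, hV, hOV⟩ := mem_prod_iff.1 (hmul hU)
  refine ⟨closure O, mem_of_superset hO subset_closure, isClosed_closure, fun y hy => ?_⟩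
  -- Points `z ∈ O` close to `y` have `y = z * (z⁻¹ * y)` with `z⁻¹ * y` close to `e`.
  have hdiv : Tendsto (fun z => r.leftDiv z y) (𝓝 y) (𝓝 r.e) := by
    have hcont : Continuous fun z => r.leftDiv z y :=
      r.continuous_leftDiv.comp (continuous_id.prodMk continuous_const)
    simpa only [leftDiv_self] using hcont.tendsto y
  obtain ⟨z, hzV, hzO⟩ := mem_closure_iff_nhds.1 hy _ (hdiv hV)
  simpa only [mem_preimage, mul_leftDiv] using hOV (mk_mem_prod hzO hzV)

end Rectification

theorem suslin_number_of_charming_rectifiable_general {G : Type u} [TopologicalSpace G]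
    (r : Rectification G) (hG : IsCharming G)
    (𝒰 : Set (Set G)) (hopen : ∀ U ∈ 𝒰, IsOpen U ∧ U.Nonempty)
    (hdisj : 𝒰.PairwiseDisjoint id) :
    𝒰.Countable := by
  have : RegularSpace G := r.regularSpace
  obtain ⟨S, hdense, hS⟩ := hG.exists_dense_hasCountableNetworkModCompact fun x y =>
    ⟨r.translate x y, r.translate_apply_self x y⟩
  exact r.isMaltsevOperation.countable_of_pairwise_disjoint_of_dense hS hdense
    (fun U : 𝒰 => (hopen U U.2).1) (fun U => (hopen U U.2).2) hdisj.subtype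

/-- The Suslin number of an arbitrary charming rectifiable space is countable: every pairwise
disjoint family of nonempty open subsets is countable. -/
theorem suslin_number_of_charming_rectifiable {G : Type u} [TopologicalSpace G] [T35Space G]
    (hrect : ∃ (φ : G × G ≃ₜ G × G) (e : G),
      (∀ z : G × G, (φ z).1 = z.1) ∧ ∀ x : G, φ (x, x) = (x, e))
    (hG : IsCharming G)
    (𝒰 : Set (Set G)) (hopen : ∀ U ∈ 𝒰, IsOpen U ∧ U.Nonempty)
    (hdisj : 𝒰.PairwiseDisjoint id) :
    𝒰.Countable := by
  obtain ⟨φ, e, hfst, hdiag⟩ := hrect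
  exact suslin_number_of_charming_rectifiable_general ⟨φ, e, hfst, hdiag⟩ hG 𝒰 hopen hdisj
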